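/- arXiv:0904.0535 — 2 statements merged into one kernel-verified Lean document; each statement's English description precedes it below -/
import Mathlib

section
/- Let g be a pseudo-Riemannian metric on a manifold M of dimension n and let v be a projective vector field for g. Then the (1,1)-tensor L̃ := g^{-1} 𝓛_v g − (1/(n+1))·tr(g^{-1} 𝓛_v g)·Id, where 𝓛_v denotes the Lie derivative along v, satisfies the compatibility equation with g, i.e., ∇_u L̃ = (1/2)(u⊗l̃ + (u⊗l̃)^*) for every tangent vector u, where l̃ = d(tr L̃). -/
open Matrix Polynomial Filter

noncomputable section

variable {ι : Type} [Fintype ι] [DecidableEq ι]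

/-- Partial derivative of a real-valued function on `ι → ℝ` in the direction of the
`j`-th coordinate vector. -/
def pd (j : ι) (F : (ι → ℝ) → ℝ) (x : ι → ℝ) : ℝ :=
  fderiv ℝ F x (Pi.single j 1)

/-- Christoffel symbols `Γ^i_{jk}` of a metric given in local coordinates as a
matrix-valued function. -/
def christoffel (g : (ι → ℝ) → Matrix ι ι ℝ) (x : ι → ℝ) (i j k : ι) : ℝ :=
  (1 / 2) * ∑ m, (g x)⁻¹ i m *
    (pd j (fun y => g y m k) x + pd k (fun y => g y m j) x - pd m (fun y => g y j k) x)

/-- A curve is a geodesic of `g` up to reparametrisation (an unparametrized geodesic):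
`γ̈ + Γ(γ̇,γ̇) = α(t)·γ̇` for some function `α`. -/
def IsPregeodesic (g : (ι → ℝ) → Matrix ι ι ℝ) (γ : ℝ → ι → ℝ) : Prop :=
  ∃ α : ℝ → ℝ, ∀ t : ℝ, ∀ i : ι,
    deriv (fun s => deriv (fun τ => γ τ i) s) t
      + ∑ j, ∑ k, christoffel g (γ t) i j k *
          deriv (fun τ => γ τ j) t * deriv (fun τ => γ τ k) t
      = α t * deriv (fun τ => γ τ i) t

/-- `g` is a pseudo-Riemannian metric (in local coordinates) on the set `U`. -/
structure IsMetricOn (g : (ι → ℝ) → Matrix ι ι ℝ) (U : Set (ι → ℝ)) : Prop where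
  smooth : ∀ i j, ContDiffOn ℝ (⊤ : ℕ∞) (fun x => g x i j) U
  symm : ∀ x ∈ U, (g x)ᵀ = g x
  nondeg : ∀ x ∈ U, IsUnit (g x).det

/-- Two metrics are geodesically equivalent on `U`: they have the same geodesics
considered as unparametrized curves. -/
def GeodEquiv (g gb : (ι → ℝ) → Matrix ι ι ℝ) (U : Set (ι → ℝ)) : Prop :=
  ∀ γ : ℝ → ι → ℝ, ContDiff ℝ (⊤ : ℕ∞) γ → (∀ t, γ t ∈ U) →
    (IsPregeodesic g γ ↔ IsPregeodesic gb γ)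

/-- The (1,1)-tensor `L(g,ḡ)^i_j = (det ḡ / det g)^{1/(n+1)} ḡ^{ik} g_{kj}`. -/
def Lten (g gb : (ι → ℝ) → Matrix ι ι ℝ) (x : ι → ℝ) : Matrix ι ι ℝ :=
  (((gb x).det / (g x).det) ^ ((1 : ℝ) / (Fintype.card ι + 1))) • ((gb x)⁻¹ * g x)

/-- An admissible factorisation `χ = χ₁·χ₂` of the characteristic polynomial of `L`:
both factors are monic of degree ≥ 1, have smooth coefficients, and have no common
complex root at any point of `U`. -/
structure AdmissibleFact (L : (ι → ℝ) → Matrix ι ι ℝ) (U : Set (ι → ℝ))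
    (chi1 chi2 : (ι → ℝ) → Polynomial ℝ) : Prop where
  factor : ∀ x ∈ U, (L x).charpoly = chi1 x * chi2 x
  monic1 : ∀ x ∈ U, (chi1 x).Monic
  monic2 : ∀ x ∈ U, (chi2 x).Monic
  deg1 : ∀ x ∈ U, 1 ≤ (chi1 x).natDegree
  deg2 : ∀ x ∈ U, 1 ≤ (chi2 x).natDegree
  smooth1 : ∀ k, ContDiffOn ℝ (⊤ : ℕ∞) (fun x => (chi1 x).coeff k) U
  smooth2 : ∀ k, ContDiffOn ℝ (⊤ : ℕ∞) (fun x => (chi2 x).coeff k) U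
  coprime : ∀ x ∈ U, ¬ ∃ z : ℂ, aeval z (chi1 x) = 0 ∧ aeval z (chi2 x) = 0

/-- The distribution `D = ker χ(L)`. -/
def Dker (L : (ι → ℝ) → Matrix ι ι ℝ) (chi : (ι → ℝ) → Polynomial ℝ) (x : ι → ℝ) :
    Submodule ℝ (ι → ℝ) :=
  LinearMap.ker (Matrix.mulVecLin (aeval (L x) (chi x)))

/-- A distribution on `U` is integrable (involutive, which is equivalent by the
Frobenius theorem): the Lie bracket of any two smooth vector fields tangent to the
distribution is again tangent to it. -/
def IsIntegrableDist (U : Set (ι → ℝ)) (D : (ι → ℝ) → Submodule ℝ (ι → ℝ)) : Prop :=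
  ∀ u v : (ι → ℝ) → ι → ℝ, ContDiffOn ℝ (⊤ : ℕ∞) u U → ContDiffOn ℝ (⊤ : ℕ∞) v U →
    (∀ x ∈ U, u x ∈ D x) → (∀ x ∈ U, v x ∈ D x) →
    ∀ x ∈ U, (fderiv ℝ v x (u x) - fderiv ℝ u x (v x)) ∈ D x

/-- The Lie derivative of the Christoffel symbols of `g` along a vector field `v`:
`(𝓛_v Γ)^i_{jk} = v^m ∂_m Γ^i_{jk} − (∂_m v^i) Γ^m_{jk} + (∂_j v^m) Γ^i_{mk}
  + (∂_k v^m) Γ^i_{jm} + ∂_j ∂_k v^i`. -/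
def lieDerivGamma (g : (ι → ℝ) → Matrix ι ι ℝ) (v : (ι → ℝ) → ι → ℝ)
    (x : ι → ℝ) (i j k : ι) : ℝ :=
  (∑ m, v x m * pd m (fun y => christoffel g y i j k) x)
  - (∑ m, pd m (fun y => v y i) x * christoffel g x m j k)
  + (∑ m, pd j (fun y => v y m) x * christoffel g x i m k)
  + (∑ m, pd k (fun y => v y m) x * christoffel g x i j m)
  + pd j (fun y => pd k (fun z => v z i) y) x

/-- `v` is a projective vector field for `g` on `U`: its local flow takes
unparametrized geodesics to geodesics; equivalently, the Lie derivative of the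
Levi-Civita connection of `g` along `v` is of the projective form
`(𝓛_v Γ)^i_{jk} = δ^i_j φ_k + δ^i_k φ_j` for some 1-form `φ`. -/
def IsProjectiveVF (g : (ι → ℝ) → Matrix ι ι ℝ) (v : (ι → ℝ) → ι → ℝ)
    (U : Set (ι → ℝ)) : Prop :=
  ContDiffOn ℝ (⊤ : ℕ∞) v U ∧
  ∃ φ : (ι → ℝ) → ι → ℝ, ∀ x ∈ U, ∀ i j k : ι,
    lieDerivGamma g v x i j k
      = (if i = j then φ x k else 0) + (if i = k then φ x j else 0)

/-- The Lie derivative of the metric `g` (a (0,2)-tensor) along `v`. -/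
def lieDerivMetric (g : (ι → ℝ) → Matrix ι ι ℝ) (v : (ι → ℝ) → ι → ℝ)
    (x : ι → ℝ) : Matrix ι ι ℝ :=
  Matrix.of fun i j =>
    (∑ m, v x m * pd m (fun y => g y i j) x)
    + (∑ m, g x m j * pd i (fun y => v y m) x)
    + (∑ m, g x i m * pd j (fun y => v y m) x)

/-- The covariant derivative `∇_r L^i_j` of a (1,1)-tensor w.r.t. the Levi-Civita
connection of `g`. -/
def covDerivT (g L : (ι → ℝ) → Matrix ι ι ℝ) (x : ι → ℝ) (r i j : ι) : ℝ :=
  pd r (fun y => L y i j) x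
  + (∑ m, christoffel g x i r m * L x m j)
  - (∑ m, christoffel g x m r j * L x i m)

/-- `g` and `L` satisfy the compatibility equation (24):
`∇_r L^i_j = ½ (δ^i_r l_j + g^{is} l_s g_{rj})` with `l = d tr L`;
equivalently `g` and `ḡ = (det L)⁻¹ g L⁻¹` are geodesically equivalent. -/
def Compatible (g L : (ι → ℝ) → Matrix ι ι ℝ) (U : Set (ι → ℝ)) : Prop :=
  ∀ x ∈ U, ∀ r i j : ι,
    covDerivT g L x r i j
      = (1 / 2) * ((if i = r then 1 else 0) * pd j (fun y => (L y).trace) x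
          + (∑ s, (g x)⁻¹ i s * pd s (fun y => (L y).trace) x) * g x r j)

/-!
Write `Γ(u)` for the connection form of `g` evaluated on `u` and `A(u)` for `𝓛_v Γ` evaluated on
`u`. Differentiating `∂_u g = Γ(u)ᵀ g + g Γ(u)` along `v` shows that `∇_u (𝓛_v g)` is
`A(u)ᵀ g + g A(u)`. Since `g` is parallel, raising an index gives
`∇_u (g⁻¹ 𝓛_v g) = A(u) + A(u)^*`, and for a projective field `A(u) = u ⊗ φ + φ(u) Id`. The trace of
this identity is `d tr(g⁻¹ 𝓛_v g) = 2(n+1) φ`, so the trace correction removes exactly the term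
`2 φ(u) Id`, leaving `∇_u L̃ = u ⊗ φ + (u ⊗ φ)^*`, whose trace is `l̃ = 2φ`.
-/

open scoped Topology

section MatrixCalculus

-- Derivatives do not depend on this choice of norm; it makes square matrices a normed algebra, so
-- that the Leibniz rule and the differentiability of inversion apply.
open scoped Matrix.Norms.Operator

variable {E : Type*} [NormedAddCommGroup E] [NormedSpace ℝ E] {x : E}

theorem fderiv_fderiv_apply {F : Type*} [NormedAddCommGroup F] [NormedSpace ℝ F]
    {f : E → F} {v : E → E} (hf : ContDiffAt ℝ 2 f x) (hv : DifferentiableAt ℝ v x) (u : E) :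
    fderiv ℝ (fun y => fderiv ℝ f y (v y)) x u =
      fderiv ℝ (fun y => fderiv ℝ f y u) x (v x) + fderiv ℝ f x (fderiv ℝ v x u) := by
  have hf' : DifferentiableAt ℝ (fderiv ℝ f) x :=
    (hf.fderiv_right (m := 1) (by norm_num)).differentiableAt one_ne_zero
  have hsymm : IsSymmSndFDerivAt ℝ f x := hf.isSymmSndFDerivAt (by simp)
  rw [fderiv_clm_apply hf' hv, fderiv_clm_apply hf' (differentiableAt_const u)]
  simp [hsymm.eq u (v x), add_comm]

theorem differentiableAt_fderiv_apply {F : Type*} [NormedAddCommGroup F] [NormedSpace ℝ F]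
    {f : E → F} {v : E → E} (hf : ContDiffAt ℝ 2 f x) (hv : DifferentiableAt ℝ v x) :
    DifferentiableAt ℝ (fun y => fderiv ℝ f y (v y)) x :=
  ((hf.fderiv_right (m := 1) (by norm_num)).differentiableAt one_ne_zero).clm_apply hv

theorem contDiffAt_matrix_of_apply {m n : Type*} [Fintype m] [Fintype n] {A : E → Matrix m n ℝ}
    {k : WithTop ℕ∞} (hA : ∀ i j, ContDiffAt ℝ k (fun y => A y i j) x) : ContDiffAt ℝ k A x :=
  let e := (Matrix.ofLinearEquiv ℝ : (m → n → ℝ) ≃ₗ[ℝ] Matrix m n ℝ).toContinuousLinearEquiv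
  e.contDiff.contDiffAt.comp x (contDiffAt_pi.2 fun i => contDiffAt_pi.2 fun j => hA i j)

section Rectangular

variable {m n : Type*} [Finite n] {A B : E → Matrix m n ℝ}

theorem fderiv_matrix_apply (hA : DifferentiableAt ℝ A x) (u : E) (i : m) (j : n) :
    fderiv ℝ A x u i j = fderiv ℝ (fun y => A y i j) x u := by
  cases nonempty_fintype n
  rw [fderiv_apply (Φ := fun y => A y i) (differentiableAt_pi.1 hA i), fderiv_apply (Φ := A) hA]
  rfl

variable [Finite m]

theorem differentiableAt_matrix :
    DifferentiableAt ℝ A x ↔ ∀ i j, DifferentiableAt ℝ (fun y => A y i j) x := by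
  cases nonempty_fintype m
  cases nonempty_fintype n
  exact differentiableAt_pi.trans (forall_congr' fun _ => differentiableAt_pi)

theorem differentiableAt_matrix_transpose (hA : DifferentiableAt ℝ A x) :
    DifferentiableAt ℝ (fun y => (A y)ᵀ) x :=
  differentiableAt_matrix.2 fun i j => differentiableAt_matrix.1 hA j i

theorem fderiv_matrix_transpose (hA : DifferentiableAt ℝ A x) (u : E) :
    fderiv ℝ (fun y => (A y)ᵀ) x u = (fderiv ℝ A x u)ᵀ := by
  ext i j
  rw [Matrix.transpose_apply, fderiv_matrix_apply hA,
    fderiv_matrix_apply (differentiableAt_matrix_transpose hA)]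
  rfl

theorem differentiableAt_matrix_add (hA : DifferentiableAt ℝ A x) (hB : DifferentiableAt ℝ B x) :
    DifferentiableAt ℝ (fun y => A y + B y) x :=
  differentiableAt_matrix.2 fun i j =>
    (differentiableAt_matrix.1 hA i j).fun_add (differentiableAt_matrix.1 hB i j)

theorem fderiv_matrix_add (hA : DifferentiableAt ℝ A x) (hB : DifferentiableAt ℝ B x) (u : E) :
    fderiv ℝ (fun y => A y + B y) x u = fderiv ℝ A x u + fderiv ℝ B x u := by
  cases nonempty_fintype m
  cases nonempty_fintype n
  exact congrArg (· u) (fderiv_fun_add hA hB)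

theorem differentiableAt_matrix_sub (hA : DifferentiableAt ℝ A x) (hB : DifferentiableAt ℝ B x) :
    DifferentiableAt ℝ (fun y => A y - B y) x :=
  differentiableAt_matrix.2 fun i j =>
    (differentiableAt_matrix.1 hA i j).fun_sub (differentiableAt_matrix.1 hB i j)

theorem fderiv_matrix_sub (hA : DifferentiableAt ℝ A x) (hB : DifferentiableAt ℝ B x) (u : E) :
    fderiv ℝ (fun y => A y - B y) x u = fderiv ℝ A x u - fderiv ℝ B x u := by
  cases nonempty_fintype m
  cases nonempty_fintype n
  exact congrArg (· u) (fderiv_fun_sub hA hB)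

theorem differentiableAt_smul_matrix {f : E → ℝ} (hf : DifferentiableAt ℝ f x)
    (M : Matrix m n ℝ) : DifferentiableAt ℝ (fun y => f y • M) x :=
  differentiableAt_matrix.2 fun i j => hf.mul_const (M i j)

theorem fderiv_smul_matrix {f : E → ℝ} (hf : DifferentiableAt ℝ f x) (M : Matrix m n ℝ) (u : E) :
    fderiv ℝ (fun y => f y • M) x u = fderiv ℝ f x u • M := by
  cases nonempty_fintype m
  cases nonempty_fintype n
  exact congrArg (· u) (fderiv_smul_const hf M)

theorem differentiableAt_fderiv_matrix_apply {v : E → E}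
    (hA : ∀ i j, ContDiffAt ℝ 2 (fun y => A y i j) x) (hv : DifferentiableAt ℝ v x) :
    DifferentiableAt ℝ (fun y => fderiv ℝ A y (v y)) x := by
  cases nonempty_fintype m
  cases nonempty_fintype n
  exact differentiableAt_fderiv_apply (contDiffAt_matrix_of_apply hA) hv

theorem fderiv_fderiv_matrix_apply {v : E → E}
    (hA : ∀ i j, ContDiffAt ℝ 2 (fun y => A y i j) x) (hv : DifferentiableAt ℝ v x) (u : E) :
    fderiv ℝ (fun y => fderiv ℝ A y (v y)) x u =
      fderiv ℝ (fun y => fderiv ℝ A y u) x (v x) + fderiv ℝ A x (fderiv ℝ v x u) := by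
  cases nonempty_fintype m
  cases nonempty_fintype n
  exact fderiv_fderiv_apply (contDiffAt_matrix_of_apply hA) hv u

end Rectangular

section Square

variable {n : Type*} [Fintype n] {A B : E → Matrix n n ℝ}

theorem differentiableAt_matrix_trace (hA : DifferentiableAt ℝ A x) :
    DifferentiableAt ℝ (fun y => (A y).trace) x :=
  (Matrix.traceLinearMap n ℝ ℝ).toContinuousLinearMap.differentiableAt.comp x hA

theorem fderiv_matrix_trace (hA : DifferentiableAt ℝ A x) (u : E) :
    fderiv ℝ (fun y => (A y).trace) x u = (fderiv ℝ A x u).trace :=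
  congrArg (· u)
    ((Matrix.traceLinearMap n ℝ ℝ).toContinuousLinearMap.hasFDerivAt.comp x hA.hasFDerivAt).fderiv

theorem differentiableAt_matrix_mul (hA : DifferentiableAt ℝ A x) (hB : DifferentiableAt ℝ B x) :
    DifferentiableAt ℝ (fun y => A y * B y) x := by
  classical exact hA.fun_mul hB

theorem fderiv_matrix_mul (hA : DifferentiableAt ℝ A x) (hB : DifferentiableAt ℝ B x) (u : E) :
    fderiv ℝ (fun y => A y * B y) x u = fderiv ℝ A x u * B x + A x * fderiv ℝ B x u := by
  classical exact (congrArg (· u) (fderiv_fun_mul' hA hB)).trans (add_comm _ _)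

theorem differentiableAt_matrix_inv [DecidableEq n] (hA : DifferentiableAt ℝ A x)
    (hdet : IsUnit (A x).det) : DifferentiableAt ℝ (fun y => (A y)⁻¹) x := by
  simp only [Matrix.nonsing_inv_eq_ringInverse]
  exact (differentiableAt_inverse ((Matrix.isUnit_iff_isUnit_det _).2 hdet)).comp x hA

end Square

end MatrixCalculus

section PartialDerivatives

variable {x : ι → ℝ}

theorem sum_mul_pd (F : (ι → ℝ) → ℝ) (w : ι → ℝ) :
    ∑ m, w m * pd m F x = fderiv ℝ F x w := by
  conv_rhs => rw [pi_eq_sum_univ' w, map_sum]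
  simp only [pd, map_smul, smul_eq_mul]

theorem differentiableAt_pd {F : (ι → ℝ) → ℝ} (hF : ContDiffAt ℝ 2 F x) (j : ι) :
    DifferentiableAt ℝ (pd j F) x :=
  differentiableAt_fderiv_apply hF (differentiableAt_const _)

/-- The Jacobian matrix `∂_k v^i` of a vector field. -/
def jacobianMatrix (v : (ι → ℝ) → ι → ℝ) (x : ι → ℝ) : Matrix ι ι ℝ :=
  Matrix.of fun i k => pd k (fun y => v y i) x

theorem differentiableAt_jacobianMatrix {v : (ι → ℝ) → ι → ℝ} (hv : ContDiffAt ℝ 2 v x) :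
    DifferentiableAt ℝ (jacobianMatrix v) x :=
  differentiableAt_matrix.2 fun i k => differentiableAt_pd (contDiffAt_pi.1 hv i) k

end PartialDerivatives

/-- `g` is a pseudo-Riemannian metric of class `C²` near `x`. -/
structure IsC2MetricAt (g : (ι → ℝ) → Matrix ι ι ℝ) (x : ι → ℝ) : Prop where
  contDiffAt : ∀ i j, ContDiffAt ℝ 2 (fun y => g y i j) x
  symm : ∀ᶠ y in 𝓝 x, (g y)ᵀ = g y
  nondeg : IsUnit (g x).det

theorem IsMetricOn.isC2MetricAt {g : (ι → ℝ) → Matrix ι ι ℝ} {U : Set (ι → ℝ)} {x : ι → ℝ}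
    (hg : IsMetricOn g U) (hU : U ∈ 𝓝 x) : IsC2MetricAt g x where
  contDiffAt i j := ((hg.smooth i j).contDiffAt hU).of_le (WithTop.coe_le_coe.2 le_top)
  symm := mem_of_superset hU hg.symm
  nondeg := hg.nondeg x (mem_of_mem_nhds hU)

namespace IsC2MetricAt

variable {g : (ι → ℝ) → Matrix ι ι ℝ} {x : ι → ℝ}

theorem differentiableAt (hg : IsC2MetricAt g x) : DifferentiableAt ℝ g x :=
  differentiableAt_matrix.2 fun i j => (hg.contDiffAt i j).differentiableAt two_ne_zero

theorem eventually (hg : IsC2MetricAt g x) : ∀ᶠ y in 𝓝 x, IsC2MetricAt g y := by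
  have hsmooth : ∀ᶠ y in 𝓝 x, ∀ i j, ContDiffAt ℝ 2 (fun z => g z i j) y :=
    eventually_all.2 fun i => eventually_all.2 fun j => (hg.contDiffAt i j).eventually (by simp)
  have hdet : ContinuousAt (fun y => (g y).det) x :=
    continuous_id.matrix_det.continuousAt.comp hg.differentiableAt.continuousAt
  filter_upwards [hsmooth, hg.symm.eventually_nhds, hdet.eventually_ne hg.nondeg.ne_zero]
    with y hy hsymm hne using ⟨hy, hsymm, hne.isUnit⟩

theorem pd_symm (hg : IsC2MetricAt g x) (r i j : ι) :
    pd r (fun y => g y i j) x = pd r (fun y => g y j i) x := by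
  have h : (fun y => g y i j) =ᶠ[𝓝 x] fun y => g y j i :=
    hg.symm.mono fun y hy => (congrFun (congrFun hy i) j).symm
  simp only [pd, h.fderiv_eq]

theorem differentiableAt_christoffel (hg : IsC2MetricAt g x) (i j k : ι) :
    DifferentiableAt ℝ (fun y => christoffel g y i j k) x := by
  have hinv := differentiableAt_matrix.1 (differentiableAt_matrix_inv hg.differentiableAt hg.nondeg)
  have hpd (r a b : ι) := differentiableAt_pd (hg.contDiffAt a b) r
  exact (DifferentiableAt.fun_sum fun m _ => (hinv i m).fun_mul
    (((hpd j m k).fun_add (hpd k m j)).fun_sub (hpd m j k))).const_mul _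

end IsC2MetricAt

section LeviCivita

/-- The connection form `(Γ(u))^i_k = u^j Γ^i_{jk}` evaluated on a constant vector `u`. -/
def connectionForm (g : (ι → ℝ) → Matrix ι ι ℝ) (u x : ι → ℝ) : Matrix ι ι ℝ :=
  Matrix.of fun i k => ∑ j, u j * christoffel g x i j k

/-- The covariant derivative `∇_u h` of a (0,2)-tensor with respect to the Levi-Civita connection
of `g`. -/
def covDerivBilin (g h : (ι → ℝ) → Matrix ι ι ℝ) (u x : ι → ℝ) : Matrix ι ι ℝ :=
  fderiv ℝ h x u - (connectionForm g u x)ᵀ * h x - h x * connectionForm g u x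

/-- The covariant derivative `∇_u L` of a (1,1)-tensor with respect to the Levi-Civita connection
of `g`. -/
def covDerivEnd (g L : (ι → ℝ) → Matrix ι ι ℝ) (u x : ι → ℝ) : Matrix ι ι ℝ :=
  fderiv ℝ L x u + connectionForm g u x * L x - L x * connectionForm g u x

/-- The Lie derivative of the Levi-Civita connection of `g` along `v`, as the endomorphism
`(𝓛_v Γ)(u)^i_k = u^j (𝓛_v Γ)^i_{jk}`. -/
def lieDerivConnection (g : (ι → ℝ) → Matrix ι ι ℝ) (v : (ι → ℝ) → ι → ℝ) (u x : ι → ℝ) :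
    Matrix ι ι ℝ :=
  fderiv ℝ (connectionForm g u) x (v x) - jacobianMatrix v x * connectionForm g u x
    + connectionForm g (fderiv ℝ v x u) x + connectionForm g u x * jacobianMatrix v x
    + fderiv ℝ (jacobianMatrix v) x u

/-- The adjoint `A^*` of an endomorphism with respect to the symmetric nondegenerate bilinear form
`G`. -/
def metricAdjoint (G A : Matrix ι ι ℝ) : Matrix ι ι ℝ :=
  G⁻¹ * Aᵀ * G

variable {g : (ι → ℝ) → Matrix ι ι ℝ} {v : (ι → ℝ) → ι → ℝ} {x : ι → ℝ}

theorem IsC2MetricAt.differentiableAt_connectionForm (hg : IsC2MetricAt g x) (u : ι → ℝ) :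
    DifferentiableAt ℝ (connectionForm g u) x :=
  differentiableAt_matrix.2 fun i k => DifferentiableAt.fun_sum fun j _ =>
    (hg.differentiableAt_christoffel i j k).const_mul _

theorem connectionForm_single (g : (ι → ℝ) → Matrix ι ι ℝ) (x : ι → ℝ) (r i k : ι) :
    connectionForm g (Pi.single r 1) x i k = christoffel g x i r k := by
  simp [connectionForm, Pi.single_apply]

theorem sum_mul_christoffel (hdet : IsUnit (g x).det) (i j k : ι) :
    ∑ a, g x i a * christoffel g x a j k = (1 / 2) *
      (pd j (fun y => g y i k) x + pd k (fun y => g y i j) x - pd i (fun y => g y j k) x) := by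
  let c : ι → ℝ := fun m =>
    pd j (fun y => g y m k) x + pd k (fun y => g y m j) x - pd m (fun y => g y j k) x
  have h : (fun a => christoffel g x a j k) = (1 / 2 : ℝ) • (g x)⁻¹ *ᵥ c := rfl
  calc ∑ a, g x i a * christoffel g x a j k
      = (g x *ᵥ ((1 / 2 : ℝ) • (g x)⁻¹ *ᵥ c)) i := by rw [← h]; rfl
    _ = (1 / 2) * c i := by
      rw [Matrix.mulVec_smul, Matrix.mulVec_mulVec, Matrix.mul_nonsing_inv _ hdet,
        Matrix.one_mulVec, Pi.smul_apply, smul_eq_mul]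

theorem mul_connectionForm_apply (hdet : IsUnit (g x).det) (u : ι → ℝ) (i k : ι) :
    (g x * connectionForm g u x) i k = ∑ j, u j * ((1 / 2) *
      (pd j (fun y => g y i k) x + pd k (fun y => g y i j) x - pd i (fun y => g y j k) x)) := by
  simp only [connectionForm, Matrix.mul_apply, Matrix.of_apply, ← sum_mul_christoffel hdet,
    Finset.mul_sum]
  rw [Finset.sum_comm]
  simp only [mul_left_comm]

theorem IsC2MetricAt.fderiv_apply_eq_connectionForm (hg : IsC2MetricAt g x) (u : ι → ℝ) :
    fderiv ℝ g x u = (connectionForm g u x)ᵀ * g x + g x * connectionForm g u x := by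
  have ht : (connectionForm g u x)ᵀ * g x = (g x * connectionForm g u x)ᵀ := by
    rw [Matrix.transpose_mul, hg.symm.self_of_nhds]
  ext i k
  rw [ht, Matrix.add_apply, Matrix.transpose_apply, mul_connectionForm_apply hg.nondeg,
    mul_connectionForm_apply hg.nondeg, ← Finset.sum_add_distrib,
    fderiv_matrix_apply hg.differentiableAt, ← sum_mul_pd]
  refine Finset.sum_congr rfl fun j _ => ?_
  rw [hg.pd_symm j k i, hg.pd_symm k j i, hg.pd_symm i j k]
  ring

theorem lieDerivMetric_eq (hg : DifferentiableAt ℝ g x) (v : (ι → ℝ) → ι → ℝ) :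
    lieDerivMetric g v x =
      fderiv ℝ g x (v x) + (jacobianMatrix v x)ᵀ * g x + g x * jacobianMatrix v x := by
  ext i j
  simp only [lieDerivMetric, jacobianMatrix, Matrix.of_apply, Matrix.add_apply, Matrix.mul_apply,
    Matrix.transpose_apply, fderiv_matrix_apply hg, sum_mul_pd, mul_comm]

theorem lieDerivConnection_single (hg : IsC2MetricAt g x) (hv : ContDiffAt ℝ 2 v x)
    (r i k : ι) : lieDerivConnection g v (Pi.single r 1) x i k = lieDerivGamma g v x i r k := by
  have hfderiv (m : ι) : fderiv ℝ v x (Pi.single r 1) m = pd r (fun y => v y m) x := by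
    rw [pd, fderiv_apply (hv.differentiableAt two_ne_zero)]
    rfl
  simp only [lieDerivConnection, Matrix.add_apply, Matrix.sub_apply, Matrix.mul_apply,
    connectionForm_single, fderiv_matrix_apply (hg.differentiableAt_connectionForm _),
    fderiv_matrix_apply (differentiableAt_jacobianMatrix hv)]
  simp only [lieDerivGamma, sum_mul_pd, connectionForm, jacobianMatrix, Matrix.of_apply, hfderiv,
    mul_comm (christoffel _ _ _ _ _)]
  rfl

theorem IsC2MetricAt.lieDerivMetric_eventuallyEq (hg : IsC2MetricAt g x)
    (v : (ι → ℝ) → ι → ℝ) : lieDerivMetric g v =ᶠ[𝓝 x] fun y =>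
      fderiv ℝ g y (v y) + (jacobianMatrix v y)ᵀ * g y + g y * jacobianMatrix v y :=
  hg.eventually.mono fun _ hy => lieDerivMetric_eq hy.differentiableAt v

theorem IsC2MetricAt.differentiableAt_lieDerivMetric (hg : IsC2MetricAt g x)
    (hv : ContDiffAt ℝ 2 v x) : DifferentiableAt ℝ (lieDerivMetric g v) x := by
  have hJ := differentiableAt_jacobianMatrix hv
  refine DifferentiableAt.congr_of_eventuallyEq ?_ (hg.lieDerivMetric_eventuallyEq v)
  exact differentiableAt_matrix_add (differentiableAt_matrix_add
    (differentiableAt_fderiv_matrix_apply hg.contDiffAt (hv.differentiableAt two_ne_zero))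
    (differentiableAt_matrix_mul (differentiableAt_matrix_transpose hJ) hg.differentiableAt))
    (differentiableAt_matrix_mul hg.differentiableAt hJ)

theorem IsC2MetricAt.differentiableAt_inv_mul_lieDerivMetric (hg : IsC2MetricAt g x)
    (hv : ContDiffAt ℝ 2 v x) :
    DifferentiableAt ℝ (fun y => (g y)⁻¹ * lieDerivMetric g v y) x :=
  differentiableAt_matrix_mul (differentiableAt_matrix_inv hg.differentiableAt hg.nondeg)
    (hg.differentiableAt_lieDerivMetric hv)

theorem IsC2MetricAt.fderiv_fderiv_apply_const (hg : IsC2MetricAt g x) (u w : ι → ℝ) :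
    fderiv ℝ (fun y => fderiv ℝ g y u) x w =
      (fderiv ℝ (connectionForm g u) x w)ᵀ * g x + (connectionForm g u x)ᵀ * fderiv ℝ g x w
        + (fderiv ℝ g x w * connectionForm g u x + g x * fderiv ℝ (connectionForm g u) x w) := by
  have hgd := hg.differentiableAt
  have hΓ := hg.differentiableAt_connectionForm u
  have hΓt := differentiableAt_matrix_transpose hΓ
  have h : (fun y => fderiv ℝ g y u) =ᶠ[𝓝 x] fun y =>
      (connectionForm g u y)ᵀ * g y + g y * connectionForm g u y :=
    hg.eventually.mono fun _ hy => hy.fderiv_apply_eq_connectionForm u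
  rw [h.fderiv_eq, fderiv_matrix_add (differentiableAt_matrix_mul hΓt hgd)
    (differentiableAt_matrix_mul hgd hΓ), fderiv_matrix_mul hΓt hgd, fderiv_matrix_mul hgd hΓ,
    fderiv_matrix_transpose hΓ]

theorem IsC2MetricAt.fderiv_lieDerivMetric (hg : IsC2MetricAt g x) (hv : ContDiffAt ℝ 2 v x)
    (u : ι → ℝ) :
    fderiv ℝ (lieDerivMetric g v) x u =
      fderiv ℝ (fun y => fderiv ℝ g y u) x (v x) + fderiv ℝ g x (fderiv ℝ v x u)
        + ((fderiv ℝ (jacobianMatrix v) x u)ᵀ * g x + (jacobianMatrix v x)ᵀ * fderiv ℝ g x u)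
        + (fderiv ℝ g x u * jacobianMatrix v x + g x * fderiv ℝ (jacobianMatrix v) x u) := by
  have hgd := hg.differentiableAt
  have hvd := hv.differentiableAt two_ne_zero
  have hJ := differentiableAt_jacobianMatrix hv
  have hJt := differentiableAt_matrix_transpose hJ
  have hvg := differentiableAt_fderiv_matrix_apply hg.contDiffAt hvd
  rw [(hg.lieDerivMetric_eventuallyEq v).fderiv_eq,
    fderiv_matrix_add (differentiableAt_matrix_add hvg (differentiableAt_matrix_mul hJt hgd))
      (differentiableAt_matrix_mul hgd hJ),
    fderiv_matrix_add hvg (differentiableAt_matrix_mul hJt hgd), fderiv_matrix_mul hJt hgd,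
    fderiv_matrix_mul hgd hJ, fderiv_matrix_transpose hJ,
    fderiv_fderiv_matrix_apply hg.contDiffAt hvd]

theorem covDerivBilin_lieDerivMetric (hg : IsC2MetricAt g x) (hv : ContDiffAt ℝ 2 v x)
    (u : ι → ℝ) :
    covDerivBilin g (lieDerivMetric g v) u x =
      (lieDerivConnection g v u x)ᵀ * g x + g x * lieDerivConnection g v u x := by
  rw [covDerivBilin, hg.fderiv_lieDerivMetric hv, hg.fderiv_fderiv_apply_const,
    lieDerivMetric_eq hg.differentiableAt, hg.fderiv_apply_eq_connectionForm u,
    hg.fderiv_apply_eq_connectionForm (fderiv ℝ v x u), lieDerivConnection]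
  simp only [Matrix.transpose_add, Matrix.transpose_sub, Matrix.transpose_mul]
  noncomm_ring

theorem covDerivBilin_mul (hg : IsC2MetricAt g x) {L : (ι → ℝ) → Matrix ι ι ℝ}
    (hL : DifferentiableAt ℝ L x) (u : ι → ℝ) :
    covDerivBilin g (fun y => g y * L y) u x = g x * covDerivEnd g L u x := by
  rw [covDerivBilin, fderiv_matrix_mul hg.differentiableAt hL,
    hg.fderiv_apply_eq_connectionForm, covDerivEnd]
  noncomm_ring

theorem covDerivBilin_congr {h k : (ι → ℝ) → Matrix ι ι ℝ} (hk : h =ᶠ[𝓝 x] k) (u : ι → ℝ) :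
    covDerivBilin g h u x = covDerivBilin g k u x := by
  rw [covDerivBilin, covDerivBilin, hk.fderiv_eq, hk.eq_of_nhds]

theorem covDerivEnd_inv_mul_lieDerivMetric (hg : IsC2MetricAt g x) (hv : ContDiffAt ℝ 2 v x)
    (u : ι → ℝ) :
    covDerivEnd g (fun y => (g y)⁻¹ * lieDerivMetric g v y) u x =
      lieDerivConnection g v u x + metricAdjoint (g x) (lieDerivConnection g v u x) := by
  have hE := hg.differentiableAt_inv_mul_lieDerivMetric hv
  have hlower : lieDerivMetric g v =ᶠ[𝓝 x] fun y => g y * ((g y)⁻¹ * lieDerivMetric g v y) :=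
    hg.eventually.mono fun y hy => (Matrix.mul_nonsing_inv_cancel_left _ _ hy.nondeg).symm
  have h := covDerivBilin_lieDerivMetric hg hv u
  rw [covDerivBilin_congr hlower, covDerivBilin_mul hg hE] at h
  rw [← Matrix.nonsing_inv_mul_cancel_left (g x) (covDerivEnd _ _ _ _) hg.nondeg, h, mul_add,
    Matrix.nonsing_inv_mul_cancel_left _ _ hg.nondeg, metricAdjoint, mul_assoc, add_comm]

theorem trace_covDerivEnd (g : (ι → ℝ) → Matrix ι ι ℝ) {L : (ι → ℝ) → Matrix ι ι ℝ}
    (hL : DifferentiableAt ℝ L x) (u : ι → ℝ) :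
    (covDerivEnd g L u x).trace = fderiv ℝ (fun y => (L y).trace) x u := by
  rw [covDerivEnd, Matrix.trace_sub, Matrix.trace_add, Matrix.trace_mul_comm (L x),
    add_sub_cancel_right, fderiv_matrix_trace hL]

theorem covDerivEnd_sub_smul_one (g : (ι → ℝ) → Matrix ι ι ℝ) {L : (ι → ℝ) → Matrix ι ι ℝ}
    {f : (ι → ℝ) → ℝ} (hL : DifferentiableAt ℝ L x) (hf : DifferentiableAt ℝ f x) (u : ι → ℝ) :
    covDerivEnd g (fun y => L y - f y • 1) u x = covDerivEnd g L u x - fderiv ℝ f x u • 1 := by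
  have hf1 := differentiableAt_smul_matrix hf (1 : Matrix ι ι ℝ)
  rw [covDerivEnd, covDerivEnd, fderiv_matrix_sub hL hf1, fderiv_smul_matrix hf, mul_sub, sub_mul,
    Matrix.mul_smul, Matrix.smul_mul, mul_one, one_mul]
  abel

theorem covDerivT_eq_covDerivEnd_apply (g : (ι → ℝ) → Matrix ι ι ℝ)
    {L : (ι → ℝ) → Matrix ι ι ℝ} (hL : DifferentiableAt ℝ L x) (r i j : ι) :
    covDerivT g L x r i j = covDerivEnd g L (Pi.single r 1) x i j := by
  simp only [covDerivT, covDerivEnd, Matrix.add_apply, Matrix.sub_apply, Matrix.mul_apply,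
    connectionForm_single, fderiv_matrix_apply hL, pd, mul_comm (L x i _)]

end LeviCivita

section Compatibility

variable {G : Matrix ι ι ℝ} {g L : (ι → ℝ) → Matrix ι ι ℝ} {x : ι → ℝ}

theorem metricAdjoint_add (G A B : Matrix ι ι ℝ) :
    metricAdjoint G (A + B) = metricAdjoint G A + metricAdjoint G B := by
  simp only [metricAdjoint, Matrix.transpose_add, mul_add, add_mul]

theorem metricAdjoint_smul_one (hG : IsUnit G.det) (c : ℝ) : metricAdjoint G (c • 1) = c • 1 := by
  simp [metricAdjoint, Matrix.nonsing_inv_mul _ hG]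

theorem trace_metricAdjoint (hG : IsUnit G.det) (A : Matrix ι ι ℝ) :
    (metricAdjoint G A).trace = A.trace := by
  rw [metricAdjoint, Matrix.trace_mul_comm, Matrix.mul_nonsing_inv_cancel_left _ _ hG,
    Matrix.trace_transpose]

theorem metricAdjoint_vecMulVec (G : Matrix ι ι ℝ) (u φ : ι → ℝ) :
    metricAdjoint G (vecMulVec u φ) = vecMulVec (G⁻¹ *ᵥ φ) (u ᵥ* G) := by
  rw [metricAdjoint, Matrix.transpose_vecMulVec, Matrix.mul_vecMulVec, Matrix.vecMulVec_mul]

theorem compatible_of_covDerivEnd_eq {U : Set (ι → ℝ)} (hL : ∀ x ∈ U, DifferentiableAt ℝ L x)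
    (hdet : ∀ x ∈ U, IsUnit (g x).det) {φ : (ι → ℝ) → ι → ℝ}
    (h : ∀ x ∈ U, ∀ r, covDerivEnd g L (Pi.single r 1) x =
      vecMulVec (Pi.single r 1) (φ x) + metricAdjoint (g x) (vecMulVec (Pi.single r 1) (φ x))) :
    Compatible g L U := by
  intro x hx r i j
  have htr (s : ι) : pd s (fun y => (L y).trace) x = 2 * φ x s := by
    rw [pd, ← trace_covDerivEnd g (hL x hx), h x hx, Matrix.trace_add,
      trace_metricAdjoint (hdet x hx), Matrix.trace_vecMulVec, single_one_dotProduct, two_mul]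
  rw [covDerivT_eq_covDerivEnd_apply g (hL x hx), h x hx, metricAdjoint_vecMulVec]
  simp only [htr, Matrix.add_apply, Matrix.vecMulVec_apply, Pi.single_apply, Matrix.mulVec,
    dotProduct, single_one_vecMul, Matrix.row, mul_left_comm _ (2 : ℝ), ← Finset.mul_sum]
  ring

/-- The endomorphism `w ↦ φ(w) u + φ(u) w`, the value on `u` of the change of connection given by
`δ^i_j φ_k + δ^i_k φ_j`. -/
def projectiveEnd (φ u : ι → ℝ) : Matrix ι ι ℝ :=
  vecMulVec u φ + (u ⬝ᵥ φ) • 1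

theorem trace_projectiveEnd (φ u : ι → ℝ) :
    (projectiveEnd φ u).trace = (Fintype.card ι + 1) * (u ⬝ᵥ φ) := by
  rw [projectiveEnd, Matrix.trace_add, Matrix.trace_vecMulVec, Matrix.trace_smul,
    Matrix.trace_one, smul_eq_mul]
  ring

variable {E : (ι → ℝ) → Matrix ι ι ℝ} {φ u : ι → ℝ}

theorem fderiv_trace_of_covDerivEnd_eq (hE : DifferentiableAt ℝ E x) (hdet : IsUnit (g x).det)
    (h : covDerivEnd g E u x = projectiveEnd φ u + metricAdjoint (g x) (projectiveEnd φ u)) :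
    fderiv ℝ (fun y => (E y).trace) x u = 2 * (Fintype.card ι + 1) * (u ⬝ᵥ φ) := by
  rw [← trace_covDerivEnd g hE, h, Matrix.trace_add, trace_metricAdjoint hdet,
    trace_projectiveEnd]
  ring

theorem covDerivEnd_sub_trace (hE : DifferentiableAt ℝ E x) (hdet : IsUnit (g x).det)
    (h : covDerivEnd g E u x = projectiveEnd φ u + metricAdjoint (g x) (projectiveEnd φ u)) :
    covDerivEnd g (fun y => E y - ((1 / (Fintype.card ι + 1)) * (E y).trace) • 1) u x =
      vecMulVec u φ + metricAdjoint (g x) (vecMulVec u φ) := by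
  have htr := differentiableAt_matrix_trace hE
  have hfactor : (1 / ((Fintype.card ι : ℝ) + 1)) * (2 * (Fintype.card ι + 1) * (u ⬝ᵥ φ)) =
      2 * (u ⬝ᵥ φ) := by
    field_simp
  rw [covDerivEnd_sub_smul_one g hE (htr.const_mul _), fderiv_const_mul htr, _root_.smul_apply,
    fderiv_trace_of_covDerivEnd_eq hE hdet h, smul_eq_mul, hfactor, h, projectiveEnd,
    metricAdjoint_add, metricAdjoint_smul_one hdet, two_mul, add_smul]
  abel

end Compatibility

section ProjectiveFields

variable {g : (ι → ℝ) → Matrix ι ι ℝ} {v : (ι → ℝ) → ι → ℝ}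

theorem lieDerivConnection_eq_projectiveEnd {x φ : ι → ℝ} (hg : IsC2MetricAt g x)
    (hv : ContDiffAt ℝ 2 v x)
    (hφ : ∀ i j k, lieDerivGamma g v x i j k =
      (if i = j then φ k else 0) + (if i = k then φ j else 0)) (r : ι) :
    lieDerivConnection g v (Pi.single r 1) x = projectiveEnd φ (Pi.single r 1) := by
  ext i k
  simp [projectiveEnd, lieDerivConnection_single hg hv, hφ, Matrix.vecMulVec_apply,
    Pi.single_apply, Matrix.one_apply]

theorem stmt6_general {U : Set (ι → ℝ)} {φ : (ι → ℝ) → ι → ℝ}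
    (hg : ∀ x ∈ U, IsC2MetricAt g x) (hv : ∀ x ∈ U, ContDiffAt ℝ 2 v x)
    (hφ : ∀ x ∈ U, ∀ i j k, lieDerivGamma g v x i j k =
      (if i = j then φ x k else 0) + (if i = k then φ x j else 0)) :
    Compatible g (fun x => (g x)⁻¹ * lieDerivMetric g v x
      - (((1 : ℝ) / (Fintype.card ι + 1)) * ((g x)⁻¹ * lieDerivMetric g v x).trace) • 1) U := by
  have hE (x) (hx : x ∈ U) := (hg x hx).differentiableAt_inv_mul_lieDerivMetric (hv x hx)
  refine compatible_of_covDerivEnd_eq (φ := φ) (fun x hx => ?_) (fun x hx => (hg x hx).nondeg)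
    fun x hx r => covDerivEnd_sub_trace (hE x hx) (hg x hx).nondeg ?_
  · exact differentiableAt_matrix_sub (hE x hx) (differentiableAt_smul_matrix
      ((differentiableAt_matrix_trace (hE x hx)).const_mul _) 1)
  · rw [covDerivEnd_inv_mul_lieDerivMetric (hg x hx) (hv x hx),
      lieDerivConnection_eq_projectiveEnd (hg x hx) (hv x hx) (hφ x hx)]

end ProjectiveFields

theorem stmt6 {n : ℕ} (U : Set (Fin n → ℝ)) (hU : IsOpen U)
    (g : (Fin n → ℝ) → Matrix (Fin n) (Fin n) ℝ) (hg : IsMetricOn g U)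
    (v : (Fin n → ℝ) → Fin n → ℝ) (hv : IsProjectiveVF g v U)
    -- the tensor `L̃ = g⁻¹ 𝓛_v g − (1/(n+1)) tr(g⁻¹ 𝓛_v g)·Id`
    (Lt : (Fin n → ℝ) → Matrix (Fin n) (Fin n) ℝ)
    (hLt : ∀ x, Lt x = (g x)⁻¹ * lieDerivMetric g v x
      - (((1 : ℝ) / (n + 1)) * ((g x)⁻¹ * lieDerivMetric g v x).trace) • 1) :
    -- then `L̃` is compatible with `g`
    Compatible g Lt U := by
  obtain rfl : Lt = _ := funext hLt
  obtain ⟨hv, φ, hφ⟩ := hv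
  simpa only [Fintype.card_fin] using stmt6_general
    (fun x hx => hg.isC2MetricAt (hU.mem_nhds hx))
    (fun x hx => (hv.contDiffAt (hU.mem_nhds hx)).of_le (WithTop.coe_le_coe.2 le_top)) hφ
end
end

section
/- In the setting where g has degree of mobility 2, v is a projective vector field for g, L is compatible with g, det L ≠ 0, {Id, L} spans the space of g-compatible tensors, and 𝓛_v L = α·L² + β·L + γ·Id as above: let χ = χ1·χ2 be an admissible factorisation of the characteristic polynomial of L and let (x¹,…,x^r, y^{r+1},…,y^n) be the local coordinate system induced by this factorisation (so that ∂_{x^i} span ker χ1(L) and ∂_{y^j} span ker χ2(L)). Then the projective vector field splits: v = Σ_{i=1}^r v^i(x) ∂_{x^i} + Σ_{j=r+1}^n v^j(y) ∂_{y^j}, i.e., the first r components of v do not depend on the y-coordinates and the last n−r components do not depend on the x-coordinates; moreover, the function β is constant. -/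
open Matrix Polynomial Filter

noncomputable section

variable {ι : Type} [Fintype ι] [DecidableEq ι]

/-- The Lie derivative of a (1,1)-tensor `L` along a vector field `v`:
`(𝓛_v L)^i_j = v^m ∂_m L^i_j − (∂_m v^i) L^m_j + (∂_j v^m) L^i_m`. -/
def lieDerivEnd (v : (ι → ℝ) → ι → ℝ) (L : (ι → ℝ) → Matrix ι ι ℝ)
    (x : ι → ℝ) : Matrix ι ι ℝ :=
  Matrix.of fun i j =>
    (∑ m, v x m * pd m (fun y => L y i j) x)
    - (∑ m, pd m (fun y => v y i) x * L x m j)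
    + (∑ m, pd j (fun y => v y m) x * L x i m)

/-- The span of the first `r` coordinate vector fields (`∂_{x^1},…,∂_{x^r}`). -/
def coordSpan (n r : ℕ) : Submodule ℝ (Fin n → ℝ) :=
  Submodule.span ℝ {e : Fin n → ℝ | ∃ i : Fin n, (i : ℕ) < r ∧ e = Pi.single i 1}

/-- The span of the last `n - r` coordinate vector fields (`∂_{y^{r+1}},…,∂_{y^n}`). -/
def coordSpan' (n r : ℕ) : Submodule ℝ (Fin n → ℝ) :=
  Submodule.span ℝ {e : Fin n → ℝ | ∃ i : Fin n, r ≤ (i : ℕ) ∧ e = Pi.single i 1}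

/-!
Since `χ₁` and `χ₂` are coprime, the projection onto a block of coordinates is a polynomial in `L`.
Hence every matrix commuting with `L` is block diagonal, and then so is every matrix whose
commutator with `L` is block diagonal.

In coordinates `𝓛_v L = D_v L + [L, J]`, where `J` is the Jacobian matrix of `v` and `D_v`
differentiates the entries along `v`. So `J` is block diagonal as soon as `𝓛_v L` is. For the given
`v` this is the case because `𝓛_v L` is a polynomial in `L`, and `v` splits. For the columns `L∂_c`
of `L` it is the case because compatibility forces the Nijenhuis torsion of `L` to vanish, that is,
`𝓛_{L∂_c} L = L ∂_c L`; so each block of `L` depends on its own coordinates only.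

Consequently every entry of `𝓛_v L`, `L²` and `Id` in row `i` is independent of the coordinates in
the block opposite to `i`. As row `i` of `L` does not vanish, the equation for `𝓛_v L` shows that
`β` is independent of these coordinates too; taking `i` from either block, `β` is constant.
-/

section BlockDiagonal

variable {R : Type*} [CommRing R]

theorem commute_of_commute_commutator {A : Type*} [Ring A] {a e x : A}
    (he : IsIdempotentElem e) (hae : ∀ y, Commute a y → Commute e y)
    (hx : Commute e (a * x - x * a)) : Commute e x := by
  -- By the Jacobi identity `[e, x]` commutes with `a`, hence with `e`; for an idempotent `e`,
  -- `[e, [e, x]] = 0` forces `[e, x] = 0`.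
  have ha : a * e = e * a := (hae a (Commute.refl a)).eq.symm
  have hcomm : Commute a (e * x - x * e) := by
    have hx' : e * (a * x - x * a) = (a * x - x * a) * e := hx
    calc a * (e * x - x * e)
        = e * (a * x - x * a) - (a * x - x * a) * e + (e * x - x * e) * a
          + ((a * e - e * a) * x + x * (e * a - a * e)) := by noncomm_ring
      _ = (e * x - x * e) * a := by rw [hx', ha]; simp
  have hy : e * (e * x - x * e) = (e * x - x * e) * e := hae _ hcomm
  have hy' : e * x + x * e = 2 • (e * x * e) := by
    calc e * x + x * e = e * e * x + x * (e * e) := by rw [he.eq]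
      _ = e * (e * x - x * e) - (e * x - x * e) * e + 2 • (e * x * e) := by noncomm_ring
      _ = 2 • (e * x * e) := by rw [hy, sub_self, zero_add]
  have hl : e * x = e * x * e := by
    have h := congrArg (e * ·) hy'
    simp only [mul_add, ← mul_assoc, he.eq, two_smul] at h
    exact add_right_cancel h
  have hr : x * e = e * x * e := by
    have h := congrArg (· * e) hy'
    simp only [add_mul, mul_assoc, he.eq, two_smul] at h
    simpa only [mul_assoc] using add_left_cancel h
  exact hl.trans hr.symm

variable (R) in
/-- The projection of `ι → R` onto the coordinates in `s`, as a diagonal matrix. -/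
def coordProj (s : Set ι) : Matrix ι ι R :=
  diagonal (s.indicator 1)

theorem isIdempotentElem_coordProj (s : Set ι) : IsIdempotentElem (coordProj R s) := by
  rw [IsIdempotentElem, coordProj, diagonal_mul_diagonal]
  congr 1
  ext i
  by_cases hi : i ∈ s <;> simp [hi]

variable (R) in
/-- The subalgebra of matrices that are block diagonal for the partition of the index set into
`s` and `sᶜ`, encoded as those commuting with the projection onto the coordinates in `s`. -/
def blockSubalgebra (s : Set ι) : Subalgebra R (Matrix ι ι R) :=
  Subalgebra.centralizer R {coordProj R s}

theorem mem_blockSubalgebra_iff_commute {s : Set ι} {M : Matrix ι ι R} :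
    M ∈ blockSubalgebra R s ↔ Commute (coordProj R s) M := by
  simp [blockSubalgebra, Subalgebra.mem_centralizer_iff, commute_iff_eq]

theorem mem_blockSubalgebra_iff {s : Set ι} {M : Matrix ι ι R} :
    M ∈ blockSubalgebra R s ↔ ∀ i j, ¬ (i ∈ s ↔ j ∈ s) → M i j = 0 := by
  rw [mem_blockSubalgebra_iff_commute, commute_iff_eq, ← Matrix.ext_iff]
  refine forall₂_congr fun i j => ?_
  by_cases hi : i ∈ s <;> by_cases hj : j ∈ s <;> simp [coordProj, hi, hj, eq_comm]

/-- Every matrix commuting with `M` is block diagonal for the partition into `s` and `sᶜ`. This is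
the form in which coprimality of the two factors of the characteristic polynomial is used. -/
def SeparatesBlocks (s : Set ι) (M : Matrix ι ι R) : Prop :=
  ∀ B, Commute M B → B ∈ blockSubalgebra R s

theorem SeparatesBlocks.mem_blockSubalgebra {s : Set ι} {M : Matrix ι ι R}
    (hM : SeparatesBlocks s M) : M ∈ blockSubalgebra R s :=
  hM M (Commute.refl M)

theorem SeparatesBlocks.mem_blockSubalgebra_of_commutator {s : Set ι} {M J : Matrix ι ι R}
    (hM : SeparatesBlocks s M) (hJ : M * J - J * M ∈ blockSubalgebra R s) :
    J ∈ blockSubalgebra R s :=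
  mem_blockSubalgebra_iff_commute.2 <| commute_of_commute_commutator (isIdempotentElem_coordProj s)
    (fun B hB => mem_blockSubalgebra_iff_commute.1 (hM B hB)) (mem_blockSubalgebra_iff_commute.1 hJ)

theorem exists_aeval_eq_coordProj {s : Set ι} {M : Matrix ι ι R} {f h : R[X]}
    (hfh : IsCoprime f h) (hf : ∀ i ∈ s, aeval M f *ᵥ Pi.single i 1 = 0)
    (hh : ∀ i ∉ s, aeval M h *ᵥ Pi.single i 1 = 0) : ∃ q : R[X], aeval M q = coordProj R s := by
  obtain ⟨a, b, hab⟩ := hfh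
  refine ⟨b * h, ext_of_mulVec_single fun i => ?_⟩
  by_cases hi : i ∈ s
  · have hbh : b * h = 1 - a * f := eq_sub_of_add_eq' hab
    rw [hbh, map_sub, map_one, map_mul, sub_mulVec, ← mulVec_mulVec, hf i hi, one_mulVec,
      mulVec_zero, sub_zero, coordProj, diagonal_mulVec_single]
    simp [hi]
  · rw [map_mul, ← mulVec_mulVec, hh i hi, mulVec_zero, coordProj, diagonal_mulVec_single]
    simp [hi]

theorem SeparatesBlocks.of_isCoprime {s : Set ι} {M : Matrix ι ι R} {f h : R[X]}
    (hfh : IsCoprime f h) (hf : ∀ i ∈ s, aeval M f *ᵥ Pi.single i 1 = 0)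
    (hh : ∀ i ∉ s, aeval M h *ᵥ Pi.single i 1 = 0) : SeparatesBlocks s M := by
  intro B hB
  obtain ⟨q, hq⟩ := exists_aeval_eq_coordProj hfh hf hh
  exact mem_blockSubalgebra_iff_commute.2 (Algebra.commute_of_mem_adjoin_singleton_of_commute
    (hq ▸ aeval_mem_adjoin_singleton R M) hB.symm).symm

theorem aeval_ne_zero_of_dvd_charpoly {K F : Type*} [Field K] [Field F] [IsAlgClosed F]
    [Algebra K F] {M : Matrix ι ι K} {f h : K[X]} (hf : f ∣ M.charpoly) (hdeg : f.degree ≠ 0)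
    (hfh : ¬ ∃ z : F, aeval z f = 0 ∧ aeval z h = 0) : aeval M h ≠ 0 := by
  intro hM
  obtain ⟨z, hz⟩ := IsAlgClosed.exists_aeval_eq_zero F f hdeg
  refine hfh ⟨z, hz, ?_⟩
  let N : Matrix ι ι F := (Algebra.ofId K F).mapMatrix M
  have hzN : z ∈ spectrum F N := by
    refine mem_spectrum_of_isRoot_charpoly ?_
    have hN : N.charpoly = M.charpoly.map (algebraMap K F) := charpoly_map M (algebraMap K F)
    rw [hN, IsRoot.def, eval_map_algebraMap]
    exact aeval_eq_zero_of_dvd_aeval_eq_zero hf hz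
  have hNh : aeval N (h.map (algebraMap K F)) = 0 := by
    rw [aeval_map_algebraMap, aeval_algHom_apply, hM, map_zero]
  have : Nonempty ι := by
    by_contra hι
    rw [not_nonempty_iff] at hι
    exact hzN (isUnit_of_subsingleton _)
  have hzh := spectrum.subset_polynomial_aeval N (h.map (algebraMap K F)) ⟨z, hzN, rfl⟩
  rw [hNh, spectrum.zero_eq] at hzh
  simpa using hzh

theorem exists_mem_of_dvd_charpoly {K F : Type*} [Field K] [Field F] [IsAlgClosed F]
    [Algebra K F] {s : Set ι} {M : Matrix ι ι K} {f h : K[X]} (hf : f ∣ M.charpoly)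
    (hdeg : f.degree ≠ 0) (hfh : ¬ ∃ z : F, aeval z f = 0 ∧ aeval z h = 0)
    (hh : ∀ i ∉ s, aeval M h *ᵥ Pi.single i 1 = 0) : ∃ i, i ∈ s := by
  by_contra! hs
  exact aeval_ne_zero_of_dvd_charpoly hf hdeg hfh
    (ext_of_mulVec_single fun i => (hh i (hs i)).trans (zero_mulVec _).symm)

end BlockDiagonal

section PartialDerivatives

theorem pd_pd_comm {F : (ι → ℝ) → ℝ} {x : ι → ℝ} (hF : ContDiffAt ℝ 2 F x) (j k : ι) :
    pd j (pd k F) x = pd k (pd j F) x := by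
  have hd : DifferentiableAt ℝ (fderiv ℝ F) x :=
    (hF.fderiv_right (m := 1) le_rfl).differentiableAt one_ne_zero
  have hpd (a b : ι) : pd a (pd b F) x
      = fderiv ℝ (fderiv ℝ F) x (Pi.single a 1) (Pi.single b 1) := by
    change fderiv ℝ (fun y => fderiv ℝ F y (Pi.single b 1)) x (Pi.single a 1) = _
    rw [fderiv_clm_apply hd (differentiableAt_const _)]
    simp
  rw [hpd, hpd]
  exact hF.isSymmSndFDerivAt (by simp) _ _

/-- The functions that are differentiable at `x` and whose derivative at `x` in the direction of
the `k`-th coordinate vanishes. -/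
def pdKer (k : ι) (x : ι → ℝ) : Subalgebra ℝ ((ι → ℝ) → ℝ) where
  carrier := {F | DifferentiableAt ℝ F x ∧ pd k F x = 0}
  add_mem' := by
    rintro F G ⟨hF, hF'⟩ ⟨hG, hG'⟩
    refine ⟨hF.add hG, ?_⟩
    rw [pd] at hF' hG' ⊢
    simp [fderiv_add hF hG, hF', hG']
  mul_mem' := by
    rintro F G ⟨hF, hF'⟩ ⟨hG, hG'⟩
    refine ⟨hF.mul hG, ?_⟩
    rw [pd] at hF' hG' ⊢
    simp [fderiv_mul hF hG, hF', hG']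
  algebraMap_mem' c := by
    refine ⟨differentiableAt_const c, ?_⟩
    change fderiv ℝ (fun _ => c) x _ = 0
    simp

variable {k : ι} {x : ι → ℝ} {F G : (ι → ℝ) → ℝ}

theorem mem_pdKer : F ∈ pdKer k x ↔ DifferentiableAt ℝ F x ∧ pd k F x = 0 := Iff.rfl

theorem mem_pdKer_of_eventuallyEq (hG : G ∈ pdKer k x) (hFG : F =ᶠ[nhds x] G) :
    F ∈ pdKer k x := by
  rw [mem_pdKer, pd] at hG ⊢
  rwa [hFG.differentiableAt_iff, hFG.fderiv_eq]

theorem inv_mem_pdKer (hF : F ∈ pdKer k x) (hFx : F x ≠ 0) : F⁻¹ ∈ pdKer k x := by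
  obtain ⟨hd, hk⟩ := mem_pdKer.1 hF
  have hinv := (hasDerivAt_inv hFx).comp_hasFDerivAt x hd.hasFDerivAt
  refine ⟨hinv.differentiableAt, ?_⟩
  rw [pd] at hk
  change fderiv ℝ (Inv.inv ∘ F) x _ = 0
  simp [hinv.fderiv, hk]

theorem mem_pdKer_of_mul_mem (hFG : F * G ∈ pdKer k x) (hG : G ∈ pdKer k x) (hGx : G x ≠ 0) :
    F ∈ pdKer k x := by
  refine mem_pdKer_of_eventuallyEq (mul_mem hFG (inv_mem_pdKer hG hGx)) ?_
  filter_upwards [(mem_pdKer.1 hG).1.continuousAt.eventually_ne hGx] with y hy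
  simp [hy]

theorem pd_mem_pdKer (hF : ContDiffAt ℝ 2 F x) (hk : ∀ᶠ y in nhds x, pd k F y = 0) (m : ι) :
    pd m F ∈ pdKer k x := by
  refine ⟨?_, (pd_pd_comm hF k m).trans (mem_pdKer_of_eventuallyEq (zero_mem _) hk).2⟩
  exact ((hF.fderiv_right (m := 1) le_rfl).differentiableAt one_ne_zero).clm_apply
    (differentiableAt_const _)

theorem sum_mul_mem_pdKer {H K : ι → (ι → ℝ) → ℝ}
    (h : ∀ m, (H m ∈ pdKer k x ∧ K m ∈ pdKer k x) ∨ H m =ᶠ[nhds x] 0 ∨ K m =ᶠ[nhds x] 0) :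
    (fun y => ∑ m, H m y * K m y) ∈ pdKer k x := by
  have hsum : ∑ m, H m * K m ∈ pdKer k x := by
    refine sum_mem fun m _ => ?_
    obtain ⟨hH, hK⟩ | hH | hK := h m
    · exact mul_mem hH hK
    · exact mem_pdKer_of_eventuallyEq (zero_mem _)
        (by simpa using hH.mul (EventuallyEq.refl _ (K m)))
    · exact mem_pdKer_of_eventuallyEq (zero_mem _)
        (by simpa using (EventuallyEq.refl _ (H m)).mul hK)
  simpa only [Finset.sum_fn, Pi.mul_def] using hsum

theorem eq_of_forall_mem_pdKer {U : Set (ι → ℝ)} (hU : IsOpen U) (hconn : IsPreconnected U)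
    (hF : ∀ x ∈ U, ∀ k, F ∈ pdKer k x) {y : ι → ℝ} (hx : x ∈ U) (hy : y ∈ U) : F x = F y := by
  obtain hι | ⟨⟨k⟩⟩ := isEmpty_or_nonempty ι
  · rw [Subsingleton.elim x y]
  refine hU.is_const_of_fderiv_eq_zero hconn
    (fun z hz => (mem_pdKer.1 (hF z hz k)).1.differentiableWithinAt) (fun z hz => ?_) hx hy
  refine ContinuousLinearMap.coe_injective (LinearMap.pi_ext' fun j => LinearMap.ext_ring ?_)
  simpa [pd] using (mem_pdKer.1 (hF z hz j)).2

end PartialDerivatives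

section LieDerivative

/-- The Jacobian matrix `(∂_j v^i)` of a vector field. -/
def jacobian (v : (ι → ℝ) → ι → ℝ) (x : ι → ℝ) : Matrix ι ι ℝ :=
  Matrix.of fun i j => pd j (fun y => v y i) x

/-- The entrywise partial derivative `∂_m L` of a matrix-valued function. -/
def pdMatrix (m : ι) (L : (ι → ℝ) → Matrix ι ι ℝ) (x : ι → ℝ) : Matrix ι ι ℝ :=
  Matrix.of fun i j => pd m (fun y => L y i j) x

theorem lieDerivEnd_eq (v : (ι → ℝ) → ι → ℝ) (L : (ι → ℝ) → Matrix ι ι ℝ) (x : ι → ℝ) :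
    lieDerivEnd v L x
      = ∑ m, v x m • pdMatrix m L x + (L x * jacobian v x - jacobian v x * L x) := by
  ext i j
  simp only [lieDerivEnd, jacobian, pdMatrix, of_apply, Matrix.add_apply, Matrix.sub_apply,
    Matrix.sum_apply, Matrix.smul_apply, smul_eq_mul, mul_apply]
  simp only [mul_comm (L x i _)]
  ring

variable {s : Set ι} {v : (ι → ℝ) → ι → ℝ} {L : (ι → ℝ) → Matrix ι ι ℝ} {x : ι → ℝ}

theorem pdMatrix_mem_blockSubalgebra (hL : ∀ᶠ y in nhds x, L y ∈ blockSubalgebra ℝ s) (m : ι) :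
    pdMatrix m L x ∈ blockSubalgebra ℝ s :=
  mem_blockSubalgebra_iff.2 fun i j hij => (mem_pdKer_of_eventuallyEq (zero_mem _)
    (hL.mono fun _ hy => mem_blockSubalgebra_iff.1 hy i j hij)).2

theorem jacobian_mem_blockSubalgebra (hL : ∀ᶠ y in nhds x, SeparatesBlocks s (L y))
    (hlie : lieDerivEnd v L x ∈ blockSubalgebra ℝ s) : jacobian v x ∈ blockSubalgebra ℝ s := by
  refine hL.self_of_nhds.mem_blockSubalgebra_of_commutator ?_
  rw [← sub_eq_iff_eq_add'.2 (lieDerivEnd_eq v L x)]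
  exact sub_mem hlie <| sum_mem fun m _ => Subalgebra.smul_mem _
    (pdMatrix_mem_blockSubalgebra (hL.mono fun _ hy => hy.mem_blockSubalgebra) m) _

end LieDerivative

section Nijenhuis

/-- The Nijenhuis torsion of `L` contracted with `∂_c`, that is, the endomorphism
`N_L(∂_c, ·) = 𝓛_{L∂_c} L - L 𝓛_{∂_c} L`. -/
def nijenhuisTorsion (L : (ι → ℝ) → Matrix ι ι ℝ) (x : ι → ℝ) (c : ι) : Matrix ι ι ℝ :=
  lieDerivEnd (fun y i => L y i c) L x - L x * pdMatrix c L x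

/-- The connection matrix `(Γ^i_{rj})` of the Levi-Civita connection of `g` in the direction
`∂_r`. -/
def connectionMatrix (g : (ι → ℝ) → Matrix ι ι ℝ) (x : ι → ℝ) (r : ι) : Matrix ι ι ℝ :=
  Matrix.of fun i j => christoffel g x i r j

variable {g L : (ι → ℝ) → Matrix ι ι ℝ} {x : ι → ℝ}

theorem christoffel_symm (hg : ∀ᶠ y in nhds x, (g y).IsSymm) (i j k : ι) :
    christoffel g x i j k = christoffel g x i k j := by
  have hpd (m : ι) : pd m (fun y => g y j k) x = pd m (fun y => g y k j) x :=
    congrArg (fun T : (ι → ℝ) →L[ℝ] ℝ => T (Pi.single m 1))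
      (EventuallyEq.fderiv_eq (hg.mono fun _ hy => hy.apply k j))
  simp only [christoffel, hpd, add_comm (pd j _ x)]

theorem of_covDerivT_eq (g L : (ι → ℝ) → Matrix ι ι ℝ) (x : ι → ℝ) (r : ι) :
    Matrix.of (covDerivT g L x r) = pdMatrix r L x
      + (connectionMatrix g x r * L x - L x * connectionMatrix g x r) := by
  ext i j
  simp only [covDerivT, pdMatrix, connectionMatrix, of_apply, Matrix.add_apply,
    Matrix.sub_apply, mul_apply]
  simp only [mul_comm (L x i _), add_sub_assoc]

theorem nijenhuisTorsion_eq_covDerivT (hg : ∀ᶠ y in nhds x, (g y).IsSymm) (c : ι)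
    {A : Matrix ι ι ℝ} (hA : ∀ i k, A i k = covDerivT g L x k i c) :
    nijenhuisTorsion L x c = ∑ m, L x m c • Matrix.of (covDerivT g L x m)
      + (L x * A - A * L x) - L x * Matrix.of (covDerivT g L x c) := by
  set Γ := ∑ m, L x m c • connectionMatrix g x m with hΓ
  -- The Leibniz rule `∇(L∂_c) = (∇L)∂_c + L∇∂_c`, whose left side has matrix `J + Γ`.
  have hJ : jacobian (fun y i => L y i c) x = A - Γ + L x * connectionMatrix g x c := by
    ext i k
    simp only [jacobian, hA, covDerivT, hΓ, connectionMatrix, of_apply, Matrix.add_apply,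
      Matrix.sub_apply, Matrix.sum_apply, Matrix.smul_apply, smul_eq_mul, mul_apply,
      christoffel_symm hg _ k]
    simp only [mul_comm (L x _ _)]
    ring
  have hsum : ∑ m, L x m c • Matrix.of (covDerivT g L x m)
      = ∑ m, L x m c • pdMatrix m L x + (Γ * L x - L x * Γ) := by
    simp only [of_covDerivT_eq, smul_add, smul_sub, Finset.sum_add_distrib,
      Finset.sum_sub_distrib, hΓ, Finset.sum_mul, Finset.mul_sum, smul_mul_assoc, mul_smul_comm]
  rw [nijenhuisTorsion, lieDerivEnd_eq, hJ, hsum, of_covDerivT_eq]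
  noncomm_ring

theorem nijenhuisTorsion_eq_zero_of_compatible {U : Set (ι → ℝ)} (hU : IsOpen U)
    (hg : ∀ x ∈ U, (g x).IsSymm) (hgL : (g x * L x).IsSymm) (hcomp : Compatible g L U)
    (hx : x ∈ U) (c : ι) : nijenhuisTorsion L x c = 0 := by
  set l : ι → ℝ := fun j => pd j (fun y => (L y).trace) x
  set w : ι → ℝ := (g x)⁻¹ *ᵥ l
  have hcov (r i j : ι) :
      covDerivT g L x r i j = (1 / 2) * ((if i = r then 1 else 0) * l j + w i * g x r j) :=
    hcomp x hx r i j
  have hcovL (r : ι) : Matrix.of (covDerivT g L x r)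
      = (1 / 2 : ℝ) • (vecMulVec (Pi.single r 1) l + vecMulVec w (g x r)) := by
    ext i j
    simp [hcov, vecMulVec_apply, Pi.single_apply]
  set A : Matrix ι ι ℝ := (1 / 2 : ℝ) • (l c • (1 : Matrix ι ι ℝ) + vecMulVec w (g x c)) with hA
  have hAc (i k : ι) : A i k = covDerivT g L x k i c := by
    rw [hcov, ← (hg x hx).apply]
    simp [hA, vecMulVec_apply, one_apply, mul_add]
  have hsum : ∑ m, L x m c • Matrix.of (covDerivT g L x m)
      = (1 / 2 : ℝ) • (vecMulVec ((L x).col c) l + vecMulVec w (g x c ᵥ* L x)) := by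
    have hLg : g x c ᵥ* L x = ∑ m, L x m c • g x m := by
      ext j
      have h := hgL.apply c j
      simpa [mul_apply, vecMul, dotProduct, (hg x hx).apply, mul_comm] using h.symm
    simp only [hcovL, hLg]
    ext i j
    simp [Matrix.sum_apply, vecMulVec_apply, Pi.single_apply, Finset.mul_sum,
      Finset.sum_add_distrib, mul_add, mul_left_comm (L x _ c)]
  rw [nijenhuisTorsion_eq_covDerivT (eventually_of_mem (hU.mem_nhds hx) hg) c hAc, hsum, hcovL, hA]
  simp only [mul_add, add_mul, mul_smul_comm, smul_mul_assoc, mul_vecMulVec, vecMulVec_mul,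
    mulVec_single_one, mul_one, one_mul]
  module

theorem jacobian_column_mem_blockSubalgebra {s : Set ι} {c : ι}
    (hL : ∀ᶠ y in nhds x, SeparatesBlocks s (L y)) (hN : nijenhuisTorsion L x c = 0) :
    jacobian (fun y i => L y i c) x ∈ blockSubalgebra ℝ s := by
  refine jacobian_mem_blockSubalgebra hL ?_
  rw [sub_eq_zero.1 hN]
  exact mul_mem hL.self_of_nhds.mem_blockSubalgebra
    (pdMatrix_mem_blockSubalgebra (hL.mono fun _ hy => hy.mem_blockSubalgebra) c)

end Nijenhuis

section Coefficient

variable {s : Set ι} {v : (ι → ℝ) → ι → ℝ} {L : (ι → ℝ) → Matrix ι ι ℝ} {x : ι → ℝ} {i k : ι}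

theorem apply_mem_pdKer_of_jacobian (hJ : ∀ᶠ y in nhds x, jacobian v y ∈ blockSubalgebra ℝ s)
    (hv : ContDiffAt ℝ 2 (fun y => v y i) x) (hik : ¬ (i ∈ s ↔ k ∈ s)) :
    (fun y => v y i) ∈ pdKer k x :=
  ⟨hv.differentiableAt two_ne_zero, mem_blockSubalgebra_iff.1 hJ.self_of_nhds i k hik⟩

theorem pd_apply_mem_pdKer_of_jacobian (hJ : ∀ᶠ y in nhds x, jacobian v y ∈ blockSubalgebra ℝ s)
    (hv : ContDiffAt ℝ 2 (fun y => v y i) x) (hik : ¬ (i ∈ s ↔ k ∈ s)) (m : ι) :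
    pd m (fun y => v y i) ∈ pdKer k x :=
  pd_mem_pdKer hv (hJ.mono fun _ hy => mem_blockSubalgebra_iff.1 hy i k hik) m

theorem entry_mem_pdKer_of_jacobian {j : ι}
    (hJ : ∀ᶠ y in nhds x, jacobian (fun z a => L z a j) y ∈ blockSubalgebra ℝ s)
    (hL : ContDiffAt ℝ 2 (fun y => L y i j) x) (hik : ¬ (i ∈ s ↔ k ∈ s)) :
    (fun y => L y i j) ∈ pdKer k x :=
  apply_mem_pdKer_of_jacobian (v := fun y a => L y a j) hJ hL hik

theorem mul_self_apply_mem_pdKer (hL : ∀ i j, ContDiffAt ℝ 2 (fun y => L y i j) x)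
    (hLs : ∀ᶠ y in nhds x, L y ∈ blockSubalgebra ℝ s)
    (hJL : ∀ c, ∀ᶠ y in nhds x, jacobian (fun z i => L z i c) y ∈ blockSubalgebra ℝ s)
    (hik : ¬ (i ∈ s ↔ k ∈ s)) (j : ι) : (fun y => (L y * L y) i j) ∈ pdKer k x := by
  simp only [mul_apply]
  refine sum_mul_mem_pdKer (H := fun m y => L y i m) (K := fun m y => L y m j) fun m => ?_
  by_cases him : i ∈ s ↔ m ∈ s
  · exact .inl ⟨entry_mem_pdKer_of_jacobian (hJL m) (hL i m) hik,
      entry_mem_pdKer_of_jacobian (hJL j) (hL m j) (by rwa [← him])⟩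
  · exact .inr (.inl (hLs.mono fun _ hy => mem_blockSubalgebra_iff.1 hy i m him))

theorem lieDerivEnd_apply_mem_pdKer (hv : ∀ i, ContDiffAt ℝ 2 (fun y => v y i) x)
    (hL : ∀ i j, ContDiffAt ℝ 2 (fun y => L y i j) x)
    (hLs : ∀ᶠ y in nhds x, L y ∈ blockSubalgebra ℝ s)
    (hJv : ∀ᶠ y in nhds x, jacobian v y ∈ blockSubalgebra ℝ s)
    (hJL : ∀ c, ∀ᶠ y in nhds x, jacobian (fun z i => L z i c) y ∈ blockSubalgebra ℝ s)
    (hik : ¬ (i ∈ s ↔ k ∈ s)) (j : ι) : (fun y => lieDerivEnd v L y i j) ∈ pdKer k x := by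
  have hLij (a b : ι) (hak : ¬ (a ∈ s ↔ k ∈ s)) : (fun y => L y a b) ∈ pdKer k x :=
    entry_mem_pdKer_of_jacobian (hJL b) (hL a b) hak
  have hL0 (m : ι) (him : ¬ (i ∈ s ↔ m ∈ s)) : (fun y => L y i m) =ᶠ[nhds x] 0 :=
    hLs.mono fun _ hy => mem_blockSubalgebra_iff.1 hy i m him
  have hdL : (fun y => ∑ m, v y m * pd m (fun z => L z i j) y) ∈ pdKer k x := by
    refine sum_mul_mem_pdKer (H := fun m y => v y m) (K := fun m => pd m _) fun m => ?_
    by_cases him : i ∈ s ↔ m ∈ s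
    · exact .inl ⟨apply_mem_pdKer_of_jacobian hJv (hv m) (by rwa [← him]),
        pd_apply_mem_pdKer_of_jacobian (hJL j) (hL i j) hik m⟩
    · exact .inr (.inr ((hJL j).mono fun _ hy => mem_blockSubalgebra_iff.1 hy i m him))
  have hJvL : (fun y => ∑ m, pd m (fun z => v z i) y * L y m j) ∈ pdKer k x := by
    refine sum_mul_mem_pdKer (H := fun m => pd m _) (K := fun m y => L y m j) fun m => ?_
    by_cases him : i ∈ s ↔ m ∈ s
    · exact .inl ⟨pd_apply_mem_pdKer_of_jacobian hJv (hv i) hik m, hLij m j (by rwa [← him])⟩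
    · exact .inr (.inl (hJv.mono fun _ hy => mem_blockSubalgebra_iff.1 hy i m him))
  have hLJv : (fun y => ∑ m, pd j (fun z => v z m) y * L y i m) ∈ pdKer k x := by
    refine sum_mul_mem_pdKer (H := fun m => pd j _) (K := fun m y => L y i m) fun m => ?_
    by_cases him : i ∈ s ↔ m ∈ s
    · exact .inl ⟨pd_apply_mem_pdKer_of_jacobian hJv (hv m) (by rwa [← him]) j, hLij i m hik⟩
    · exact .inr (.inr (hL0 m him))
  exact add_mem (sub_mem hdL hJvL) hLJv

theorem coefficient_mem_pdKer (hv : ∀ i, ContDiffAt ℝ 2 (fun y => v y i) x)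
    (hL : ∀ i j, ContDiffAt ℝ 2 (fun y => L y i j) x)
    (hLs : ∀ᶠ y in nhds x, L y ∈ blockSubalgebra ℝ s)
    (hJv : ∀ᶠ y in nhds x, jacobian v y ∈ blockSubalgebra ℝ s)
    (hJL : ∀ c, ∀ᶠ y in nhds x, jacobian (fun z i => L z i c) y ∈ blockSubalgebra ℝ s)
    {α γ : ℝ} {β : (ι → ℝ) → ℝ}
    (hlie : ∀ᶠ y in nhds x, lieDerivEnd v L y = α • (L y * L y) + β y • L y + γ • 1)
    (hdet : IsUnit (L x).det) (hik : ¬ (i ∈ s ↔ k ∈ s)) : β ∈ pdKer k x := by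
  obtain ⟨j, hj⟩ : ∃ j, L x i j ≠ 0 := by
    by_contra! h
    exact hdet.ne_zero (det_eq_zero_of_row_eq_zero i h)
  have hβL : β * (fun y => L y i j) ∈ pdKer k x := by
    refine mem_pdKer_of_eventuallyEq (sub_mem (sub_mem
      (lieDerivEnd_apply_mem_pdKer hv hL hLs hJv hJL hik j)
      (algebraMap_mem _ (γ * (1 : Matrix ι ι ℝ) i j)))
      (Subalgebra.smul_mem _ (mul_self_apply_mem_pdKer hL hLs hJL hik j) α)) ?_
    filter_upwards [hlie] with y hy
    simp [hy]
  exact mem_pdKer_of_mul_mem hβL (entry_mem_pdKer_of_jacobian (hJL j) (hL i j) hik) hj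

end Coefficient

theorem AdmissibleFact.separatesBlocks {L : (ι → ℝ) → Matrix ι ι ℝ} {U : Set (ι → ℝ)}
    {chi1 chi2 : (ι → ℝ) → ℝ[X]} (hfac : AdmissibleFact L U chi1 chi2) {x : ι → ℝ} (hx : x ∈ U)
    {s : Set ι} (hD1 : ∀ i ∈ s, Pi.single i 1 ∈ Dker L chi1 x)
    (hD2 : ∀ i ∉ s, Pi.single i 1 ∈ Dker L chi2 x) : SeparatesBlocks s (L x) := by
  refine .of_isCoprime ?_ hD1 hD2
  rw [Polynomial.isCoprime_iff_aeval_ne_zero_of_isAlgClosed ℝ ℂ]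
  intro z
  by_contra! h
  exact hfac.coprime x hx ⟨z, h⟩

theorem AdmissibleFact.exists_not_mem_iff_mem {L : (ι → ℝ) → Matrix ι ι ℝ} {U : Set (ι → ℝ)}
    {chi1 chi2 : (ι → ℝ) → ℝ[X]} (hfac : AdmissibleFact L U chi1 chi2) {x : ι → ℝ} (hx : x ∈ U)
    {s : Set ι} (hD1 : ∀ i ∈ s, Pi.single i 1 ∈ Dker L chi1 x)
    (hD2 : ∀ i ∉ s, Pi.single i 1 ∈ Dker L chi2 x) (k : ι) : ∃ i, ¬ (i ∈ s ↔ k ∈ s) := by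
  have hdeg1 : (chi1 x).degree ≠ 0 := (natDegree_pos_iff_degree_pos.1 (hfac.deg1 x hx)).ne'
  have hdeg2 : (chi2 x).degree ≠ 0 := (natDegree_pos_iff_degree_pos.1 (hfac.deg2 x hx)).ne'
  by_cases hk : k ∈ s
  · obtain ⟨i, hi⟩ := exists_mem_of_dvd_charpoly (s := sᶜ) (F := ℂ)
      (Dvd.intro_left _ (hfac.factor x hx).symm) hdeg2
      (fun ⟨z, h2, h1⟩ => hfac.coprime x hx ⟨z, h1, h2⟩) (fun i hi => hD1 i (not_not.1 hi))
    exact ⟨i, by simpa [hk] using hi⟩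
  · obtain ⟨i, hi⟩ := exists_mem_of_dvd_charpoly (F := ℂ)
      (Dvd.intro _ (hfac.factor x hx).symm) hdeg1 (hfac.coprime x hx) hD2
    exact ⟨i, by simpa [hk] using hi⟩

theorem stmt8_general {U : Set (ι → ℝ)} (hU : IsOpen U) (hconn : IsPreconnected U)
    {v : (ι → ℝ) → ι → ℝ} (hv : ContDiffOn ℝ 2 v U) {L : (ι → ℝ) → Matrix ι ι ℝ}
    (hL : ∀ i j, ContDiffOn ℝ 2 (fun x => L x i j) U)
    (hN : ∀ x ∈ U, ∀ c, nijenhuisTorsion L x c = 0) (hdet : ∀ x ∈ U, IsUnit (L x).det)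
    {α γ : ℝ} {β : (ι → ℝ) → ℝ}
    (hlie : ∀ x ∈ U, lieDerivEnd v L x = α • (L x * L x) + β x • L x + γ • 1)
    {chi1 chi2 : (ι → ℝ) → ℝ[X]} (hfac : AdmissibleFact L U chi1 chi2) {s : Set ι}
    (hD1 : ∀ x ∈ U, ∀ i ∈ s, Pi.single i 1 ∈ Dker L chi1 x)
    (hD2 : ∀ x ∈ U, ∀ i ∉ s, Pi.single i 1 ∈ Dker L chi2 x) :
    (∀ x ∈ U, ∀ i m, ¬ (i ∈ s ↔ m ∈ s) → pd m (fun y => v y i) x = 0) ∧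
      ∀ x ∈ U, ∀ x' ∈ U, β x = β x' := by
  have near {p : (ι → ℝ) → Prop} (h : ∀ y ∈ U, p y) (x) (hx : x ∈ U) : ∀ᶠ y in nhds x, p y :=
    eventually_of_mem (hU.mem_nhds hx) h
  have hsep : ∀ x ∈ U, SeparatesBlocks s (L x) := fun x hx =>
    hfac.separatesBlocks hx (hD1 x hx) (hD2 x hx)
  have hLs : ∀ x ∈ U, L x ∈ blockSubalgebra ℝ s := fun x hx => (hsep x hx).mem_blockSubalgebra
  have hJv : ∀ x ∈ U, jacobian v x ∈ blockSubalgebra ℝ s := fun x hx => by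
    refine jacobian_mem_blockSubalgebra (near hsep x hx) ?_
    rw [hlie x hx]
    exact add_mem (add_mem (Subalgebra.smul_mem _ (mul_mem (hLs x hx) (hLs x hx)) _)
      (Subalgebra.smul_mem _ (hLs x hx) _)) (Subalgebra.smul_mem _ (one_mem _) _)
  have hJL (c) : ∀ x ∈ U, jacobian (fun y i => L y i c) x ∈ blockSubalgebra ℝ s := fun x hx =>
    jacobian_column_mem_blockSubalgebra (near hsep x hx) (hN x hx c)
  refine ⟨fun x hx => mem_blockSubalgebra_iff.1 (hJv x hx), fun x hx y hy => ?_⟩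
  refine eq_of_forall_mem_pdKer hU hconn (fun z hz k => ?_) hx hy
  obtain ⟨i, hik⟩ := hfac.exists_not_mem_iff_mem hz (hD1 z hz) (hD2 z hz) k
  exact coefficient_mem_pdKer
    (contDiffAt_pi.1 (hv.contDiffAt (hU.mem_nhds hz)))
    (fun i j => (hL i j).contDiffAt (hU.mem_nhds hz)) (near hLs z hz) (near hJv z hz)
    (fun c => near (hJL c) z hz) (near hlie z hz) (hdet z hz) hik

theorem stmt8 {n r : ℕ} (hr : r ≤ n)
    (U : Set (Fin n → ℝ)) (hU : IsOpen U) (hconn : IsConnected U)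
    (g : (Fin n → ℝ) → Matrix (Fin n) (Fin n) ℝ) (hg : IsMetricOn g U)
    (v : (Fin n → ℝ) → Fin n → ℝ) (hv : IsProjectiveVF g v U)
    (L : (Fin n → ℝ) → Matrix (Fin n) (Fin n) ℝ)
    (hLsmooth : ∀ i j, ContDiffOn ℝ (⊤ : ℕ∞) (fun x => L x i j) U)
    (hLsa : ∀ x ∈ U, (g x * L x)ᵀ = g x * L x)
    (hLcomp : Compatible g L U)
    (hLdet : ∀ x ∈ U, IsUnit (L x).det)
    -- degree of mobility two, with basis `{Id, L}`
    (hspan : ∀ L' : (Fin n → ℝ) → Matrix (Fin n) (Fin n) ℝ,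
      (∀ i j, ContDiffOn ℝ (⊤ : ℕ∞) (fun x => L' x i j) U) →
      (∀ x ∈ U, (g x * L' x)ᵀ = g x * L' x) →
      Compatible g L' U →
      ∃ a b : ℝ, ∀ x ∈ U, L' x = a • L x + b • (1 : Matrix (Fin n) (Fin n) ℝ))
    (hindep : ∀ a b : ℝ,
      (∀ x ∈ U, a • L x + b • (1 : Matrix (Fin n) (Fin n) ℝ) = 0) → a = 0 ∧ b = 0)
    -- the equation `𝓛_v L = α·L² + β·L + γ·Id` of Lemma 2, with
    -- `β = −𝓛_v(log|det L|) + α·tr L + γ·tr L⁻¹ + ν`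
    (α γ ν : ℝ) (β : (Fin n → ℝ) → ℝ)
    (hβ : ∀ x ∈ U, β x = (- (∑ m, v x m * pd m (fun y => Real.log |(L y).det|) x))
        + α * (L x).trace + γ * ((L x)⁻¹).trace + ν)
    (hlie : ∀ x ∈ U, lieDerivEnd v L x
      = α • (L x * L x) + β x • L x + γ • (1 : Matrix (Fin n) (Fin n) ℝ))
    -- an admissible factorisation and the induced adapted coordinate system
    (chi1 chi2 : (Fin n → ℝ) → Polynomial ℝ)
    (hfac : AdmissibleFact L U chi1 chi2)
    (hdeg : ∀ x ∈ U, (chi1 x).natDegree = r)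
    (hD1 : ∀ x ∈ U, Dker L chi1 x = coordSpan n r)
    (hD2 : ∀ x ∈ U, Dker L chi2 x = coordSpan' n r) :
    -- then the projective vector field splits …
    (∀ x ∈ U, ∀ i : Fin n, (i : ℕ) < r →
      ∀ m : Fin n, r ≤ (m : ℕ) → pd m (fun y => v y i) x = 0) ∧
    (∀ x ∈ U, ∀ i : Fin n, r ≤ (i : ℕ) →
      ∀ m : Fin n, (m : ℕ) < r → pd m (fun y => v y i) x = 0) ∧
    -- … and the function `β` is constant
    (∀ x ∈ U, ∀ x' ∈ U, β x = β x') := by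
  obtain ⟨hsplit, hconst⟩ := stmt8_general (s := {i : Fin n | (i : ℕ) < r}) hU
    hconn.isPreconnected (contDiffOn_infty.1 hv.1 2)
    (fun i j => contDiffOn_infty.1 (hLsmooth i j) 2)
    (fun x hx => nijenhuisTorsion_eq_zero_of_compatible hU hg.symm (hLsa x hx) hLcomp hx)
    hLdet hlie hfac
    (fun x hx i hi => hD1 x hx ▸ Submodule.subset_span ⟨i, hi, rfl⟩)
    (fun x hx i hi => hD2 x hx ▸ Submodule.subset_span ⟨i, not_lt.1 hi, rfl⟩)
  exact ⟨fun x hx i hi m hm => hsplit x hx i m fun h => (h.1 hi).not_ge hm,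
    fun x hx i hi m hm => hsplit x hx i m fun h => (h.2 hm).not_ge hi, hconst⟩
end
end
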